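/- Let α ≤ β ≤ −1 be negative integers, let M = (M_i)_{i≥0} be real parameters with M_i ∉ {0,1}, and let F be a finite set of positive integers with {−β, …, −α−β−1} ⊆ F. Write λ^{α,β}(v) = v(v+α+β+1). Then for every n ∈ σ_F, the exceptional Jacobi polynomial P_n^{α,β;M,F} satisfies the second order differential equation (1−x²)·(P_n^{α,β;M,F})''(x) + h_1(x)·(P_n^{α,β;M,F})'(x) + h_0(x)·P_n^{α,β;M,F}(x) = −λ^{α,β}(n−u_F)·P_n^{α,β;M,F}(x) at every x with Ω_{M,F}^{α,β}(x) ≠ 0, where h_1(x) = β−α − (α+β+2n_F+2)x − 2(1−x²)·(Ω_{M,F}^{α,β})'(x)/Ω_{M,F}^{α,β}(x) and h_0(x) = −λ^{α,β}(n_F) + [α−β+(2n_F+α+β)x]·(Ω_{M,F}^{α,β})'(x)/Ω_{M,F}^{α,β}(x) + (1−x²)·(Ω_{M,F}^{α,β})''(x)/Ω_{M,F}^{α,β}(x). -/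

import Mathlib

open Finset MeasureTheory

noncomputable section ExceptionalHahnJacobi

/-- Pochhammer symbol `(z)_m = z (z+1) ⋯ (z+m-1)`. -/
def poch (z : ℝ) (m : ℕ) : ℝ := ∏ i ∈ Finset.range m, (z + (i : ℝ))

/-- Pochhammer symbol with integer exponent; `(z)_{-k} = 1 / ((z-1)(z-2)⋯(z-k))`. -/
def pochZ (z : ℝ) (m : ℤ) : ℝ :=
  if 0 ≤ m then poch z m.toNat else 1 / poch (z - ((-m).toNat : ℝ)) (-m).toNat

/-- Generalized binomial coefficient `C(z, k) = z(z-1)⋯(z-k+1)/k!`. -/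
def genBinom (z : ℝ) (k : ℕ) : ℝ := (∏ i ∈ Finset.range k, (z - (i : ℝ))) / (k.factorial : ℝ)

/-- `λ^{a,b}(x) = x (x + a + b + 1)`. -/
def lam (a b x : ℝ) : ℝ := x * (x + a + b + 1)

/-- Hahn polynomial `h_n^{a,b,N}(x)`. -/
def hahn (a b N : ℝ) (n : ℕ) (x : ℝ) : ℝ :=
  ∑ j ∈ Finset.range (n + 1),
    poch (-(n : ℝ)) j * poch (a + b + (n : ℝ) + 1) j * poch (-N + (j : ℝ)) (n - j) *
      poch (a + (j : ℝ) + 1) (n - j) * poch (-x) j / (j.factorial : ℝ)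

/-- Dual Hahn polynomial `R_n^{a,b,N}(x)`. -/
def dualHahn (a b N : ℝ) (n : ℕ) (x : ℝ) : ℝ :=
  ∑ j ∈ Finset.range (n + 1),
    poch (-(n : ℝ)) j * poch (-N + (j : ℝ)) (n - j) * poch (a + (j : ℝ) + 1) (n - j) /
        ((n.factorial : ℝ) * (-1 : ℝ) ^ j * (j.factorial : ℝ)) *
      ∏ i ∈ Finset.range j, (x - (i : ℝ) * (a + b + 1 + (i : ℝ)))

/-- Dual Hahn polynomial with integer degree; zero for negative degree. -/
def dualHahnZ (a b N : ℝ) (m : ℤ) (x : ℝ) : ℝ :=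
  if 0 ≤ m then dualHahn a b N m.toNat x else 0

/-- Jacobi polynomial `P_n^{a,b}(x)`. -/
def jacobiP (a b : ℝ) (n : ℕ) (x : ℝ) : ℝ :=
  (2 : ℝ)⁻¹ ^ n * ∑ j ∈ Finset.range (n + 1),
    genBinom ((n : ℝ) + a) j * genBinom ((n : ℝ) + b) (n - j) * (x - 1) ^ (n - j) * (x + 1) ^ j

/-- The function `φ_u^{α,β,N}(s,x)`, a normalized terminating ₃F₂. -/
def phiH (α β : ℤ) (N : ℝ) (u : ℕ) (s x : ℝ) : ℝ :=
  poch ((α : ℝ) + 1) (max u (-α - β - (u : ℤ) - 1).toNat) *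
    poch (-N) (max u (-α - β - (u : ℤ) - 1).toNat) *
    ∑ j ∈ Finset.range (u + 1),
      poch (-(u : ℝ)) j * poch ((u : ℝ) - s + (α : ℝ) + (β : ℝ) + 1) j * poch (-x) j /
        (poch ((α : ℝ) - s + 1) j * poch (-N) j * (j.factorial : ℝ))

/-- The polynomials `Ĥ_n^{α,β,N;M}(x)`. -/
def Hhat (α β : ℤ) (N : ℝ) (M : ℕ → ℝ) (n : ℕ) (x : ℝ) : ℝ :=
  if ⌈((-α - β : ℤ) : ℚ) / 2⌉ ≤ (n : ℤ) ∧ (n : ℤ) ≤ -α - 1 then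
    deriv (fun s => phiH α β N n s x) 0 -
      deriv (fun s => phiH α β N (-α - β - (n : ℤ) - 1).toNat s x) 0
  else if -α ≤ (n : ℤ) ∧ (n : ℤ) ≤ -α - β - 1 then
    (-1 : ℝ) ^ ((β : ℤ) + (n : ℤ)) * ((β + (n : ℤ)).toNat.factorial : ℝ) *
      (((-α - β - (n : ℤ) - 1).toNat.factorial : ℝ) * poch (-x) (-α).toNat *
          hahn (-(α : ℝ)) (β : ℝ) ((α : ℝ) + N) ((α + (n : ℤ)).toNat) (x + (α : ℝ)) +
        (((α + (n : ℤ)).toNat.factorial : ℝ)) *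
            poch (-N - (α : ℝ) - (β : ℝ) - (n : ℝ) - 1) (2 * (n : ℤ) + α + β + 1).toNat /
            (M ((α + (n : ℤ)).toNat) - 1) *
          hahn (α : ℝ) (β : ℝ) N ((-α - β - (n : ℤ) - 1).toNat) x)
  else hahn (α : ℝ) (β : ℝ) N n x

/-- The function `φ_u^{α,β}(s,x)`, a normalized terminating ₂F₁. -/
def phiJ (α β : ℤ) (u : ℕ) (s x : ℝ) : ℝ :=
  poch ((α : ℝ) + 1) (max u (-α - β - (u : ℤ) - 1).toNat) /
      ((max u.factorial (-α - β - (u : ℤ) - 1).toNat.factorial : ℕ) : ℝ) *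
    ∑ j ∈ Finset.range (u + 1),
      poch (-(u : ℝ)) j * poch ((u : ℝ) - s + (α : ℝ) + (β : ℝ) + 1) j /
          (poch ((α : ℝ) - s + 1) j * (j.factorial : ℝ)) * ((1 - x) / 2) ^ j

/-- The polynomials `P̂_n^{α,β;M}(x)`. -/
def Phat (α β : ℤ) (M : ℕ → ℝ) (n : ℕ) (x : ℝ) : ℝ :=
  if ⌈((-α - β : ℤ) : ℚ) / 2⌉ ≤ (n : ℤ) ∧ (n : ℤ) ≤ -α - 1 then
    deriv (fun s => phiJ α β n s x) 0 -
      deriv (fun s => phiJ α β (-α - β - (n : ℤ) - 1).toNat s x) 0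
  else if -α ≤ (n : ℤ) ∧ (n : ℤ) ≤ -α - β - 1 then
    (-1 : ℝ) ^ ((β : ℤ) + (n : ℤ)) *
      ((((n : ℤ) + α).toNat.factorial : ℝ) * (((n : ℤ) + β).toNat.factorial : ℝ) *
        ((-α - β - (n : ℤ) - 1).toNat.factorial : ℝ)) / (n.factorial : ℝ) *
      ((M ((α + (n : ℤ)).toNat) - 1)⁻¹ * jacobiP (α : ℝ) (β : ℝ) ((-α - β - (n : ℤ) - 1).toNat) x +
        ((1 - x) / 2) ^ (-α).toNat * jacobiP (-(α : ℝ)) (β : ℝ) ((α + (n : ℤ)).toNat) x)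
  else jacobiP (α : ℝ) (β : ℝ) n x

/-- `u_F = Σ_{f ∈ F} f - C(n_F + 1, 2)`. -/
def uF (F : Finset ℕ) : ℕ := (∑ f ∈ F, f) - (F.card + 1).choose 2

/-- `n ∈ σ_F = {u_F, u_F + 1, …} \ {u_F + f : f ∈ F}`. -/
def inSigma (F : Finset ℕ) (n : ℕ) : Prop := uF F ≤ n ∧ n - uF F ∉ F

/-- The `i`-th element of `F` in increasing order. -/
def elemOf (F : Finset ℕ) (i : Fin F.card) : ℕ := ((F.orderIsoOfFin rfl i : {x // x ∈ F}) : ℕ)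

/-- The `i`-th element of a finite set of integers, in increasing order. -/
def elemOfZ (S : Finset ℤ) (i : Fin S.card) : ℤ := ((S.orderIsoOfFin rfl i : {x // x ∈ S}) : ℤ)

/-- Exceptional Hahn polynomial `h_n^{α,β,N;M,F}(x)`. -/
def exHahn (α β : ℤ) (N : ℝ) (M : ℕ → ℝ) (F : Finset ℕ) (n : ℕ) (x : ℝ) : ℝ :=
  Matrix.det (Matrix.of fun i j : Fin (F.card + 1) =>
    Fin.cases (Hhat α β N M (n - uF F) (x + ((j : ℕ) : ℝ)))
      (fun k => Hhat α β N M (elemOf F k) (x + ((j : ℕ) : ℝ))) i)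

/-- The polynomial `Ω_{M,F}^{α,β,N}(x)`. -/
def OmegaH (α β : ℤ) (N : ℝ) (M : ℕ → ℝ) (F : Finset ℕ) (x : ℝ) : ℝ :=
  Matrix.det (Matrix.of fun i j : Fin F.card =>
    Hhat α β N M (elemOf F i) (x + ((j : ℕ) : ℝ)))

/-- The polynomial `Λ_{M,F}^{α,β,N}(x)` (columns `j ∈ {1,…,n_F+1}`, `j ≠ n_F`). -/
def LambdaH (α β : ℤ) (N : ℝ) (M : ℕ → ℝ) (F : Finset ℕ) (x : ℝ) : ℝ :=
  Matrix.det (Matrix.of fun i j : Fin F.card =>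
    Hhat α β N M (elemOf F i)
      (x + ((if (j : ℕ) = F.card - 1 then F.card else (j : ℕ) : ℕ) : ℝ)))

/-- Exceptional Jacobi polynomial `P_n^{α,β;M,F}(x)`. -/
def exJacobi (α β : ℤ) (M : ℕ → ℝ) (F : Finset ℕ) (n : ℕ) (x : ℝ) : ℝ :=
  Matrix.det (Matrix.of fun i j : Fin (F.card + 1) =>
    Fin.cases (iteratedDeriv (j : ℕ) (Phat α β M (n - uF F)) x)
      (fun k => iteratedDeriv (j : ℕ) (Phat α β M (elemOf F k)) x) i)

/-- The polynomial `Ω_{M,F}^{α,β}(x)`. -/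
def OmegaJ (α β : ℤ) (M : ℕ → ℝ) (F : Finset ℕ) (x : ℝ) : ℝ :=
  Matrix.det (Matrix.of fun i j : Fin F.card =>
    iteratedDeriv (j : ℕ) (Phat α β M (elemOf F i)) x)

/-- `F_ext = F \ {-β, …, -α-β-1}`. -/
def Fext (α β : ℤ) (F : Finset ℕ) : Finset ℕ :=
  F.filter fun f : ℕ => ((f : ℤ) < -β ∨ -α - β ≤ (f : ℤ))

/-- Admissibility of the data `α, β, M, F`. -/
def IsAdmissible (α β : ℤ) (M : ℕ → ℝ) (F : Finset ℕ) : Prop :=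
  (∀ i : ℕ, (i : ℤ) ≤ -β - 1 → (∀ f ∈ F, (i : ℤ) ≠ -β - (f : ℤ) - 1) →
      Real.sign (M i) =
        Real.sign (∏ f ∈ Fext α β F, (((i : ℝ) - (f : ℝ) - (α : ℝ)) * ((i : ℝ) + (f : ℝ) + (β : ℝ) + 1)))) ∧
  (∀ x : ℤ, 0 ≤ x → (∃ f ∈ F, x ≤ (f : ℤ) + α + β) →
      0 ≤ ∏ f ∈ F.filter (fun f : ℕ => -α - β ≤ (f : ℤ)), (x - (f : ℤ) - α - β))

/-- `U_{F-} = {f + α + β : f ∈ F, 1 ≤ f ≤ -β-1}`. -/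
def UFm (α β : ℤ) (F : Finset ℕ) : Finset ℤ :=
  (F.filter fun f : ℕ => (1 ≤ f ∧ (f : ℤ) ≤ -β - 1)).image fun f : ℕ => (f : ℤ) + α + β

/-- `U_{F+} = {f + α + β : f ∈ F, f ≥ -α-β}`. -/
def UFp (α β : ℤ) (F : Finset ℕ) : Finset ℤ :=
  (F.filter fun f : ℕ => -α - β ≤ (f : ℤ)).image fun f : ℕ => (f : ℤ) + α + β

/-- `U_F = U_{F-} ∪ U_{F+}`. -/
def UF (α β : ℤ) (F : Finset ℕ) : Finset ℤ := UFm α β F ∪ UFp α β F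

/-- The weight of the measure `ω_{α,β,N}^{M,F}` at the point `x`. -/
def wH (α β : ℤ) (N : ℕ) (M : ℕ → ℝ) (F : Finset ℕ) (x : ℕ) : ℝ :=
  genBinom ((α : ℝ) + (F.card : ℝ) + (x : ℝ)) x *
      genBinom ((β : ℝ) + (N : ℝ) - (x : ℝ)) (N - F.card - x) /
    (OmegaH α β (N : ℝ) M F (x : ℝ) * OmegaH α β (N : ℝ) M F ((x : ℝ) + 1))

/-- The weight `ω_{α,β;M,F}(x)` on `[-1,1]`. -/
def wJ (α β : ℤ) (M : ℕ → ℝ) (F : Finset ℕ) (x : ℝ) : ℝ :=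
  (1 - x) ^ (α + (F.card : ℤ)) * (1 + x) ^ (β + (F.card : ℤ)) / (OmegaJ α β M F x) ^ 2

/-- The measure on `[-1,1]` with density `ω_{α,β;M,F}`. -/
def jacobiMeasure (α β : ℤ) (M : ℕ → ℝ) (F : Finset ℕ) : Measure ℝ :=
  (volume.restrict (Set.Icc (-1 : ℝ) 1)).withDensity fun x => ENNReal.ofReal (wJ α β M F x)

/-- Mass of the dual Hahn measure `ρ_{b,a,N̂}` at `λ^{a,b}(x)`. -/
def rhoMass (a b Nh : ℤ) (x : ℕ) : ℝ :=
  (2 * (x : ℝ) + (a : ℝ) + (b : ℝ) + 1) * poch ((b : ℝ) + 1) x * poch (-(Nh : ℝ)) x *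
      (Nh.toNat.factorial : ℝ) /
    ((-1 : ℝ) ^ x * poch ((x : ℝ) + (a : ℝ) + (b : ℝ) + 1) (Nh + 1).toNat *
      poch ((a : ℝ) + 1) x * (x.factorial : ℝ))

/-- Mass of the measure `ν_{a,b,N̂}^{M}` at `λ^{a,b}(s)`. -/
def nuMass (a b Nh : ℤ) (M : ℕ → ℝ) (s : ℤ) : ℝ :=
  if -b ≤ s ∧ s ≤ -1 then
    (2 * (s : ℝ) + (a : ℝ) + (b : ℝ) + 1) * poch ((Nh : ℝ) + 1 - (s : ℝ)) (s + b).toNat /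
        poch ((Nh : ℝ) + (b : ℝ) + 1) (s + a + 1).toNat * M ((s + b).toNat)
  else if 0 ≤ s ∧ s ≤ Nh then
    poch ((Nh : ℝ) + 1) b.toNat ^ 2 / poch ((b : ℝ) + 1) (a - b).toNat * rhoMass a b Nh s.toNat /
      ∏ i ∈ Finset.range b.toNat, (((s : ℝ) + (a : ℝ) + (i : ℝ) + 1) * ((s : ℝ) + (b : ℝ) - (i : ℝ)))
  else 0

/-- `ζ_v` (defined for any integer `v` via `pochZ`). -/
def zetaH (α β : ℤ) (N : ℝ) (v : ℤ) : ℝ :=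
  pochZ (-N - (α : ℝ) - (β : ℝ)) v * poch ((v : ℝ) + 1) (-α).toNat *
    ((v - α - β).toNat.factorial : ℝ)

/-- `θ_v^M`. -/
def thetaM (β : ℤ) (M : ℕ → ℝ) (v : ℕ) : ℝ :=
  if (v : ℤ) ≤ -β - 1 then 1 - M ((-β - 1 - (v : ℤ)).toNat) else 1

/-- `τ_v = ∏_{u ∈ U_F} (λ^{a,b}(v+α+β) - λ^{a,b}(u))` with `a = -α`, `b = -β`. -/
def tauH (α β : ℤ) (F : Finset ℕ) (v : ℕ) : ℝ :=
  ∏ u ∈ UF α β F,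
    (lam ((-α : ℤ) : ℝ) ((-β : ℤ) : ℝ) ((v : ℝ) + (α : ℝ) + (β : ℝ)) -
      lam ((-α : ℤ) : ℝ) ((-β : ℤ) : ℝ) ((u : ℤ) : ℝ))

/-- `ξ_n`. -/
def xiH (α β : ℤ) (N : ℝ) (F : Finset ℕ) (n : ℕ) : ℝ :=
  pochZ (N - (n : ℝ) + 1) ((n : ℤ) + α + β) ^ (α + (F.card : ℤ) + 1) *
    ∏ j ∈ Finset.range (F.card + 1), poch (N - (n : ℝ) - (j : ℝ) + 1) j

/-- `κ_M`. -/
def kappaM (α β : ℤ) (N : ℝ) (M : ℕ → ℝ) (F : Finset ℕ) : ℝ :=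
  (∏ u ∈ UFm α β F, (1 - M ((-u + α - 1).toNat))) * ∏ u ∈ UF α β F, zetaH α β N u

/-- Entry `(i,j)` (0-based) of the determinant defining `q_n^{a,b,N̂;M,U_F}`. -/
def qEntry (α β : ℤ) (N : ℝ) (M : ℕ → ℝ) (F : Finset ℕ) (n : ℕ) (x : ℝ) (i j : ℕ) : ℝ :=
  if i = 0 then
    (-1 : ℝ) ^ j * dualHahnZ (((-α).toNat : ℝ)) (((-β).toNat : ℝ)) (N + (α : ℝ) + (β : ℝ))
      ((n : ℤ) - (-α).toNat + j) x
  else if h1 : i - 1 < (UFm α β F).card then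
    (-1 : ℝ) ^ j * dualHahnZ (((-α).toNat : ℝ)) (((-β).toNat : ℝ)) (N + (α : ℝ) + (β : ℝ))
      ((n : ℤ) - (-α).toNat + j)
      (lam (((-α).toNat : ℝ)) (((-β).toNat : ℝ)) ((elemOfZ (UFm α β F) ⟨i - 1, h1⟩ : ℤ) : ℝ))
  else if i - 1 - (UFm α β F).card < (-α).toNat then
    poch (((-α).toNat : ℝ) + ((-β).toNat : ℝ) + (N + (α : ℝ) + (β : ℝ)) - (n : ℝ) - (j : ℝ) + 1) j *
      Hhat α β (-2 - (N + (α : ℝ) + (β : ℝ))) M ((-β).toNat + (i - 1 - (UFm α β F).card))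
        (-(n : ℝ) + ((-α).toNat : ℝ) - (j : ℝ) - 1)
  else if h3 : i - 1 - (UFm α β F).card - (-α).toNat < (UFp α β F).card then
    (-1 : ℝ) ^ j * dualHahnZ (((-α).toNat : ℝ)) (((-β).toNat : ℝ)) (N + (α : ℝ) + (β : ℝ))
      ((n : ℤ) - (-α).toNat + j)
      (lam (((-α).toNat : ℝ)) (((-β).toNat : ℝ))
        ((elemOfZ (UFp α β F) ⟨i - 1 - (UFm α β F).card - (-α).toNat, h3⟩ : ℤ) : ℝ))
  else 0

/-- The Krall dual Hahn orthogonal polynomial `q_n^{a,b,N̂;M,U_F}(x)`. -/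
def qKrall (α β : ℤ) (N : ℝ) (M : ℕ → ℝ) (F : Finset ℕ) (n : ℕ) (x : ℝ) : ℝ :=
  Matrix.det (Matrix.of fun i j : Fin (1 + (UFm α β F).card + (-α).toNat + (UFp α β F).card) =>
      qEntry α β N M F n x (i : ℕ) (j : ℕ)) /
    ((-1 : ℝ) ^ ((n + (-α).toNat + (-β).toNat) * ((UF α β F).card + 1) +
        ((-α).toNat + (-β).toNat).choose 2 + ((-β).toNat).choose 2 + (-α).toNat) *
      ∏ u ∈ UF α β F, (x - lam (((-α).toNat : ℝ)) (((-β).toNat : ℝ)) ((u : ℤ) : ℝ)))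

/-- Row used in the renormalized determinant `P̄`: for `-α ≤ g ≤ -α-β-1` it is
`(M_{α+g} - 1) · P̂_g` written without the division by `M_{α+g} - 1`. -/
def PhatBarRow (α β : ℤ) (M : ℕ → ℝ) (g : ℕ) (x : ℝ) : ℝ :=
  if -α ≤ (g : ℤ) ∧ (g : ℤ) ≤ -α - β - 1 then
    (-1 : ℝ) ^ ((β : ℤ) + (g : ℤ)) *
      ((((g : ℤ) + α).toNat.factorial : ℝ) * (((g : ℤ) + β).toNat.factorial : ℝ) *
        ((-α - β - (g : ℤ) - 1).toNat.factorial : ℝ)) / (g.factorial : ℝ) *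
      (jacobiP (α : ℝ) (β : ℝ) ((-α - β - (g : ℤ) - 1).toNat) x +
        (M ((α + (g : ℤ)).toNat) - 1) * ((1 - x) / 2) ^ (-α).toNat *
          jacobiP (-(α : ℝ)) (β : ℝ) ((α + (g : ℤ)).toNat) x)
  else Phat α β M g x

/-- The renormalized exceptional Jacobi polynomial
`P̄_n^{α,β;M,F} = (∏_{i=0}^{-β-1} (M_i - 1)) · P_n^{α,β;M,F}`
(written so that the factors `M_i - 1` are distributed into the corresponding rows of the
determinant; this agrees with the product formula whenever all `M_i ≠ 1`). -/
def Pbar (α β : ℤ) (M : ℕ → ℝ) (F : Finset ℕ) (n : ℕ) (x : ℝ) : ℝ :=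
  (∏ i ∈ (Finset.range (-β).toNat).filter
      (fun i : ℕ => (((i : ℤ) - α).toNat ∉ F ∧ ((i : ℤ) - α).toNat ≠ n - uF F)), (M i - 1)) *
    Matrix.det (Matrix.of fun r j : Fin (F.card + 1) =>
      Fin.cases (iteratedDeriv (j : ℕ) (PhatBarRow α β M (n - uF F)) x)
        (fun k => iteratedDeriv (j : ℕ) (PhatBarRow α β M (elemOf F k)) x) r)

end ExceptionalHahnJacobi

open Polynomial in
/-- Generalized Wronskian. -/
noncomputable def WV {N : ℕ} (g : Fin N → ℝ[X]) (σ : Fin N → ℕ) : ℝ[X] :=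
  Matrix.det (Matrix.of fun i j => derivative^[σ j] (g i))

open Polynomial in
lemma WV_zero {N : ℕ} (g : Fin N → ℝ[X]) (σ : Fin N → ℕ) (i j : Fin N) (hij : i ≠ j)
    (h : σ i = σ j) : WV g σ = 0 :=
  Matrix.det_zero_of_column_eq hij (by intro k; simp [h])

open Polynomial in
lemma WV_deriv {N : ℕ} (g : Fin N → ℝ[X]) (σ : Fin N → ℕ) :
    derivative (WV g σ) = ∑ j, WV g (Function.update σ j (σ j + 1)) := by
  unfold WV
  simp only [Matrix.det_apply, derivative_sum, Matrix.of_apply]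
  rw [Finset.sum_comm]
  refine Finset.sum_congr rfl fun τ _ => ?_
  rw [← Finset.smul_sum]
  simp only [Units.smul_def, zsmul_eq_mul, derivative_mul]
  simp only [derivative_intCast, zero_mul, zero_add]
  congr 1
  rw [derivative_prod_finset]
  refine Finset.sum_congr rfl fun j _ => ?_
  rw [← Finset.prod_erase_mul _ _ (Finset.mem_univ j)]
  congr 1
  · refine Finset.prod_congr rfl fun i hi => ?_
    rw [Function.update_of_ne (Finset.ne_of_mem_erase hi)]
  · simp [Function.iterate_succ_apply']

open Polynomial in
lemma sum_row_col {N : ℕ} (A B : Matrix (Fin N) (Fin N) ℝ[X]) :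
    ∑ i, (A.updateRow i (B i)).det = ∑ j, (A.updateCol j (fun i => B i j)).det := by
  have h1 : ∀ i, (A.updateRow i (B i)).det = ∑ j, B i j * A.adjugate j i := by
    intro i
    rw [Matrix.det_eq_sum_mul_adjugate_row _ i]
    refine Finset.sum_congr rfl fun j _ => ?_
    simp [Matrix.adjugate_apply]
  have h2 : ∀ j, (A.updateCol j (fun i => B i j)).det = ∑ i, B i j * A.adjugate j i := by
    intro j
    rw [Matrix.det_eq_sum_mul_adjugate_col _ j]
    refine Finset.sum_congr rfl fun i _ => ?_
    have : ∀ A : Matrix (Fin N) (Fin N) ℝ[X], A.adjugate j i = (A.updateCol j (Pi.single i 1)).det := by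
      intro A
      rw [← Matrix.det_transpose, ← Matrix.updateRow_transpose, ← Matrix.adjugate_apply,
        ← Matrix.adjugate_transpose]; rfl
    simp [this]
  simp only [h1, h2]
  exact Finset.sum_comm

open Polynomial in
lemma WV_updateCol {N : ℕ} (g : Fin N → ℝ[X]) (σ : Fin N → ℕ) (j : Fin N) (s : ℕ) :
    ((Matrix.of fun i j => derivative^[σ j] (g i)).updateCol j (fun i => derivative^[s] (g i))).det
      = WV g (Function.update σ j s) := by
  unfold WV
  congr 1
  ext1 i l
  by_cases h : l = j
  · subst h; simp
  · simp [h]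

open Polynomial in
lemma iter_D (r t : ℝ) (g : ℝ[X]) (j : ℕ) :
    derivative^[j] ((1 - X ^ 2) * derivative (derivative g) + (C r - C t * X) * derivative g) =
      (1 - X ^ 2) * derivative^[j+2] g + (C r - C t * X - C (2 * (j:ℝ)) * X) * derivative^[j+1] g
        + C (-((j:ℝ) * ((j:ℝ) - 1)) - (j:ℝ) * t) * derivative^[j] g := by
  induction j with
  | zero => simp [Function.iterate_succ_apply']
  | succ j ih =>
    rw [Function.iterate_succ_apply', ih]
    simp only [Function.iterate_succ_apply', derivative_add, derivative_mul, derivative_sub,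
      derivative_C, derivative_X, derivative_X_pow, derivative_one]
    push_cast
    simp only [map_sub, map_neg, map_mul, map_add, map_one, map_ofNat]
    ring

/-- sums over a Wronskian with shifted columns -/
lemma WV_sum1 {m : ℕ} (g : Fin (m+1) → Polynomial ℝ) (c : Fin (m+1) → Polynomial ℝ) :
    ∑ j, c j * WV g (Function.update (fun j => (j : ℕ)) j ((j : ℕ) + 1)) =
      c (Fin.last m) * WV g (Function.update (fun j => (j : ℕ)) (Fin.last m) (m + 1)) := by
  rw [Finset.sum_eq_single (Fin.last m)]
  · simp
  · intro j _ hj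
    have hlt : (j : ℕ) < m := by
      have := j.is_lt
      have : (j : ℕ) ≠ m := fun h => hj (Fin.ext h)
      omega
    rw [WV_zero g _ j ⟨j + 1, by omega⟩ (by intro h; simp [Fin.ext_iff] at h), mul_zero]
    rw [Function.update_self, Function.update_of_ne (by intro h; simp [Fin.ext_iff] at h)]
  · simp

open Polynomial in
lemma WV_d1 {m : ℕ} (g : Fin (m+1) → ℝ[X]) :
    derivative (WV g (fun j => (j : ℕ))) =
      WV g (Function.update (fun j => (j : ℕ)) (Fin.last m) (m + 1)) := by
  rw [WV_deriv]
  have := WV_sum1 g 1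
  simpa using this

open Polynomial in
lemma WV_d2 {m : ℕ} (g : Fin (m+2) → ℝ[X]) :
    derivative (derivative (WV g (fun j => (j : ℕ)))) =
      WV g (Function.update (fun j => (j : ℕ)) (Fin.last (m+1)) (m + 3)) +
      WV g (Function.update (Function.update (fun j => (j : ℕ)) (Fin.last (m+1)) (m + 2))
        (Fin.castSucc (Fin.last m)) (m+1)) := by
  rw [WV_d1, WV_deriv, Fin.sum_univ_castSucc, Fin.sum_univ_castSucc, Finset.sum_eq_zero, add_comm]
  · simp [Fin.castSucc_ne_last]
  · intro j _
    have := j.is_lt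
    apply WV_zero g _ j.castSucc.castSucc ⟨j + 1, by omega⟩ (by intro h; simp [Fin.ext_iff] at h)
    rw [Function.update_self, Function.update_of_ne, Function.update_of_ne, Function.update_of_ne]
    · simp
    all_goals simp [Fin.ext_iff]
    all_goals omega

lemma WV_swap {N : ℕ} (g : Fin N → Polynomial ℝ) (σ : Fin N → ℕ) (i j : Fin N) (h : i ≠ j) :
    WV g (σ ∘ Equiv.swap i j) = - WV g σ := by
  unfold WV
  have := Matrix.det_permute' (Equiv.swap i j) (Matrix.of fun a b => Polynomial.derivative^[σ b] (g a))
  rw [Equiv.Perm.sign_swap h] at this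
  simp only [Units.val_neg, Units.val_one, Int.cast_neg, Int.cast_one, neg_mul, one_mul] at this
  exact this

open Polynomial in
lemma WV_sum2 {m : ℕ} (g : Fin (m+1) → ℝ[X]) :
    ∑ j, WV g (Function.update (fun j => (j : ℕ)) j ((j : ℕ) + 2)) =
      2 * WV g (Function.update (fun j => (j : ℕ)) (Fin.last m) (m + 2)) -
      derivative (derivative (WV g (fun j => (j : ℕ)))) := by
  cases m with
  | zero => 
    rw [WV_d1, WV_deriv]
    simp [two_mul]
  | succ m =>
    rw [WV_d2, Fin.sum_univ_castSucc, Fin.sum_univ_castSucc, Finset.sum_eq_zero]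
    · have : WV g (Function.update (Function.update (fun j => (j : ℕ)) (Fin.last (m+1)) (m + 2))
        (Fin.castSucc (Fin.last m)) (m+1)) = - 
          WV g (Function.update (fun j => (j : ℕ)) (Fin.castSucc (Fin.last m)) (m+2)) := by
        rw [← WV_swap g _ (Fin.castSucc (Fin.last m)) (Fin.last (m+1)) (Fin.castSucc_ne_last _)]
        congr 1
        funext l
        simp only [Function.comp]
        by_cases h1 : l = Fin.last (m+1)
        · subst h1
          rw [Equiv.swap_apply_right]
          simp [(Fin.castSucc_ne_last _).symm]
        · by_cases h2 : l = Fin.castSucc (Fin.last m)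
          · subst h2
            rw [Equiv.swap_apply_left]
            simp [(Fin.castSucc_ne_last _).symm]
          · rw [Equiv.swap_apply_of_ne_of_ne h2 h1]
            simp [h1, h2]
      rw [this]
      simp
      ring
    · intro j _
      have := j.is_lt
      apply WV_zero g _ j.castSucc.castSucc ⟨j + 2, by omega⟩ (by intro h; simp [Fin.ext_iff] at h)
      rw [Function.update_self, Function.update_of_ne]
      · simp
      all_goals simp [Fin.ext_iff]

open Polynomial in
/-- The trace identity. -/
lemma WV_trace {m : ℕ} (r t : ℝ) (g : Fin (m+1) → ℝ[X]) (a b : Fin (m+1) → ℝ)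
    (π : Fin (m+1) → Fin (m+1)) (hπ : ∀ i, b i = 0 ∨ π i ≠ i)
    (hD : ∀ i, (1 - X ^ 2) * derivative (derivative (g i)) + (C r - C t * X) * derivative (g i)
      = C (a i) * g i + C (b i) * g (π i)) :
    (1 - X ^ 2) * (2 * WV g (Function.update (fun j => (j : ℕ)) (Fin.last m) (m + 2)) -
      derivative (derivative (WV g (fun j => (j : ℕ))))) +
    (C r - C t * X - C (2 * (m:ℝ)) * X) * derivative (WV g (fun j => (j : ℕ))) +
    C (∑ j : Fin (m+1), (-((j:ℝ) * ((j:ℝ) - 1)) - (j:ℝ) * t)) * WV g (fun j => (j : ℕ)) =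
    C (∑ i, a i) * WV g (fun j => (j : ℕ)) := by
  have key := sum_row_col (Matrix.of fun i j : Fin (m+1) => derivative^[(j:ℕ)] (g i))
    (Matrix.of fun i j : Fin (m+1) => derivative^[(j:ℕ)] ((1 - X ^ 2) * derivative (derivative (g i)) + (C r - C t * X) * derivative (g i)))
  have hL : ∀ i, ((Matrix.of fun i j : Fin (m+1) => derivative^[(j:ℕ)] (g i)).updateRow i
    ((Matrix.of fun i j : Fin (m+1) => derivative^[(j:ℕ)] ((1 - X ^ 2) * derivative (derivative (g i)) + (C r - C t * X) * derivative (g i))) i)).det = C (a i) * WV g (fun j => (j : ℕ)) := by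
    intro i
    have e : (Matrix.of fun i j : Fin (m+1) => derivative^[(j:ℕ)] ((1 - X ^ 2) * derivative (derivative (g i)) + (C r - C t * X) * derivative (g i))) i
      = (C (a i)) • (Matrix.of fun i j : Fin (m+1) => derivative^[(j:ℕ)] (g i)) i +
       (C (b i)) • (Matrix.of fun i j : Fin (m+1) => derivative^[(j:ℕ)] (g i)) (π i) := by
      funext j
      simp only [Matrix.of_apply, hD, Pi.add_apply, Pi.smul_apply, smul_eq_mul]
      rw [iterate_map_add, iterate_derivative_C_mul, iterate_derivative_C_mul]
    rw [e, Matrix.det_updateRow_add, Matrix.det_updateRow_smul, Matrix.det_updateRow_smul,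
      Matrix.updateRow_eq_self]
    rcases hπ i with h | h
    · simp [h, WV]
    · have := Matrix.det_updateRow_eq_zero (M := Matrix.of fun i j : Fin (m+1) => derivative^[(j:ℕ)] (g i)) h
      erw [this]; simp [WV]
  have hR : ∀ j, ((Matrix.of fun i j : Fin (m+1) => derivative^[(j:ℕ)] (g i)).updateCol j
    (fun i => (Matrix.of fun i j : Fin (m+1) => derivative^[(j:ℕ)] ((1 - X ^ 2) * derivative (derivative (g i)) + (C r - C t * X) * derivative (g i))) i j)).det =
      (1 - X^2) * WV g (Function.update (fun j => (j : ℕ)) j ((j : ℕ) + 2)) +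
      (C r - C t * X - C (2 * (j:ℝ)) * X) * WV g (Function.update (fun j => (j : ℕ)) j ((j : ℕ) + 1)) +
      C (-((j:ℝ) * ((j:ℝ) - 1)) - (j:ℝ) * t) * WV g (fun j => (j : ℕ)) := by
    intro j
    have e : (fun i => (Matrix.of fun i j : Fin (m+1) => derivative^[(j:ℕ)] ((1 - X ^ 2) * derivative (derivative (g i)) + (C r - C t * X) * derivative (g i))) i j)
      = (1 - X^2 : ℝ[X]) • (fun i => derivative^[(j:ℕ)+2] (g i)) + 
       (C r - C t * X - C (2 * (j:ℝ)) * X) • (fun i => derivative^[(j:ℕ)+1] (g i)) + 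
       C (-((j:ℝ) * ((j:ℝ) - 1)) - (j:ℝ) * t) • (fun i => derivative^[(j:ℕ)] (g i)) := by
      funext i
      simp only [Matrix.of_apply, Pi.add_apply, Pi.smul_apply, smul_eq_mul]
      rw [iter_D]
    rw [e, Matrix.det_updateCol_add, Matrix.det_updateCol_add, Matrix.det_updateCol_smul,
      Matrix.det_updateCol_smul, Matrix.det_updateCol_smul]
    have := WV_updateCol g (fun j => (j:ℕ)) j
    rw [this, this, this, Function.update_eq_self]
  simp only [hL, hR] at key
  rw [← Finset.sum_mul, Finset.sum_add_distrib, Finset.sum_add_distrib, ← Finset.mul_sum,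
    ← Finset.sum_mul, WV_sum1 g (fun j => (C r - C t * X - C (2 * (j:ℝ)) * X)), WV_sum2, ← WV_d1, ← map_sum, ← map_sum] at key
  rw [key]
  simp

open Polynomial in
lemma WV_plucker {m : ℕ} (f0 : ℝ[X]) (f : Fin (m+1) → ℝ[X]) :
    WV f (fun j => (j:ℕ)) * WV (Fin.cons f0 f : Fin (m+2) → ℝ[X]) 
      (Function.update (Function.update (fun j => (j : ℕ)) (Fin.last (m+1)) (m + 2))
        (Fin.castSucc (Fin.last m)) (m+1)) -
    WV f (Function.update (fun j => (j : ℕ)) (Fin.last m) (m+1)) * WV (Fin.cons f0 f : Fin (m+2) → ℝ[X])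
      (Function.update (fun j => (j : ℕ)) (Fin.last (m+1)) (m+2)) +
    WV f (Function.update (fun j => (j : ℕ)) (Fin.last m) (m+2)) * WV (Fin.cons f0 f : Fin (m+2) → ℝ[X])
      (fun j => (j : ℕ)) = 0 := by
  set G : ℕ → ℝ[X] := fun s => WV f (Function.update (fun j => (j : ℕ)) (Fin.last m) s) with hG
  obtain ⟨c, hc⟩ : ∃ c : Fin (m+1) → ℝ[X], ∀ s, G s = ∑ i, c i * derivative^[s] (f i) := by
    refine ⟨fun i => (Matrix.of fun i j : Fin (m+1) => derivative^[(j:ℕ)] (f i)).adjugate (Fin.last m) i, fun s => ?_⟩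
    have := WV_updateCol f (fun j => (j:ℕ)) (Fin.last m) s
    rw [hG]; simp only
    rw [← this, ← Matrix.cramer_apply, Matrix.cramer_eq_adjugate_mulVec]
    rfl
  have hz : ∀ s, s < m → G s = 0 := by
    intro s hs
    apply WV_zero f _ (Fin.last m) ⟨s, by omega⟩ (by simp [Fin.ext_iff]; omega)
    rw [Function.update_self, Function.update_of_ne (by simp [Fin.ext_iff]; omega)]
  have hm : G m = WV f (fun j => (j:ℕ)) := by
    rw [hG]; simp only
    congr 1
    exact Function.update_eq_self (Fin.last m) _
  set g := (Fin.cons f0 f : Fin (m+2) → ℝ[X]) with hg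
  let Z : Matrix (Fin (m+3)) (Fin (m+3)) ℝ[X] := Matrix.of fun i j =>
    Fin.cases (G j) (fun k => derivative^[(j:ℕ)] (g k)) i
  have hZ : Z.det = 0 := by
    apply Matrix.exists_vecMul_eq_zero_iff.1
    refine ⟨Fin.cons 1 (Fin.cons 0 (fun i => - c i)), ?_, ?_⟩
    · intro h
      have := congrFun h 0
      simp at this
    · funext j
      simp only [Matrix.vecMul, dotProduct, Z]
      rw [Fin.sum_univ_succ, Fin.sum_univ_succ]
      simp [hg, hc]
  rw [Matrix.det_succ_row_zero] at hZ
  have hterm : ∀ j : Fin (m+3), (-1 : ℝ[X])^(j:ℕ) * Z 0 j * (Z.submatrix Fin.succ j.succAbove).det =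
    (-1)^(j:ℕ) * G j * WV g (fun l => (j.succAbove l : ℕ)) := by
    intro j; rfl
  simp only [hterm] at hZ
  rw [Fin.sum_univ_castSucc, Fin.sum_univ_castSucc, Fin.sum_univ_castSucc, Finset.sum_eq_zero] at hZ
  · have e1 : (fun l : Fin (m+2) => (((Fin.last m).castSucc.castSucc).succAbove l : ℕ)) =
      (Function.update (Function.update (fun j : Fin (m+2) => (j : ℕ)) (Fin.last (m+1)) (m + 2))
        (Fin.castSucc (Fin.last m)) (m+1)) := by
      funext l
      have := l.is_lt
      simp only [Fin.succAbove, Function.update_apply, Fin.lt_def, Fin.ext_iff]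
      simp
      split_ifs <;> simp <;> omega
    have e2 : (fun l : Fin (m+2) => (((Fin.last (m+1)).castSucc).succAbove l : ℕ)) =
      (Function.update (fun j : Fin (m+2) => (j : ℕ)) (Fin.last (m+1)) (m+2)) := by
      funext l
      have := l.is_lt
      simp only [Fin.succAbove, Function.update_apply, Fin.lt_def, Fin.ext_iff]
      simp
      split_ifs <;> simp <;> omega
    have e3 : (fun l : Fin (m+2) => ((Fin.last (m+2)).succAbove l : ℕ)) = (fun j : Fin (m+2) => (j : ℕ)) := by
      funext l; simp
    rw [e1, e2, e3] at hZ
    simp only [Fin.val_castSucc, Fin.val_last] at hZ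
    rw [← hm]
    have h1 : ((-1:ℝ[X])^m) ≠ 0 := pow_ne_zero _ (by simp)
    apply mul_left_cancel₀ h1
    rw [mul_zero, ← hZ]
    ring
  · intro j _
    rw [hz _ (by simp)]
    simp

open Polynomial in
theorem wronskian_main {m : ℕ} (r t l0 : ℝ) (f0 : ℝ[X]) (f : Fin (m+1) → ℝ[X]) (a b : Fin (m+1) → ℝ)
    (π : Fin (m+1) → Fin (m+1)) (hπ : ∀ i, b i = 0 ∨ π i ≠ i)
    (hD0 : (1 - X ^ 2) * derivative (derivative f0) + (C r - C t * X) * derivative f0 = C l0 * f0)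
    (hD : ∀ i, (1 - X ^ 2) * derivative (derivative (f i)) + (C r - C t * X) * derivative (f i)
      = C (a i) * f i + C (b i) * f (π i)) (W Y : ℝ[X])
    (hW : W = WV f (fun j => (j:ℕ))) (hY : Y = WV (Fin.cons f0 f : Fin (m+2) → ℝ[X]) (fun j => (j:ℕ))) :
    (1 - X ^ 2) * (derivative (derivative Y) * W - 2 * derivative W * derivative Y
      + derivative (derivative W) * Y) + (C r - C t * X - C (2 * ((m:ℝ)+1)) * X) * derivative Y * W
      - (C r - C t * X - C (2 * (m:ℝ)) * X) * derivative W * Y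
      + C (-(((m:ℝ)+1) * m) - ((m:ℝ)+1) * t) * Y * W = C l0 * Y * W := by
  have hS := WV_trace r t f a b π hπ hD
  have hT := WV_trace (m := m+1) r t (Fin.cons f0 f) (Fin.cons l0 a) (Fin.cons 0 b)
    (Fin.cons 0 (fun i => (π i).succ)) 
    (by
      intro i
      refine Fin.cases ?_ (fun i => ?_) i
      · simp
      · simpa using hπ i)
    (by
      intro i
      refine Fin.cases ?_ (fun i => ?_) i
      · simpa using hD0
      · simpa using hD i)
  have hP := WV_plucker f0 f
  have hd2 := WV_d2 (Fin.cons f0 f : Fin (m+2) → ℝ[X])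
  have hd1 := WV_d1 (Fin.cons f0 f : Fin (m+2) → ℝ[X])
  have hd1' := WV_d1 f
  rw [Fin.sum_univ_castSucc, Fin.sum_univ_succ (n := m+1) (f := (Fin.cons l0 a : Fin (m+2) → ℝ))] at hT
  simp only [Fin.cons_zero, Fin.cons_succ, Fin.val_castSucc, Fin.val_last] at hT
  rw [← hd1, ← hd1'] at hP
  rw [← hW] at hS hP
  rw [← hY] at hT hP hd2
  set E : ℝ := ∑ x : Fin (m+1), (-((x:ℝ) * ((x:ℝ) - 1)) - (x:ℝ) * t)
  set A : ℝ := ∑ i, a i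
  generalize WV f (Function.update (fun j => (j : ℕ)) (Fin.last m) (m+2)) = S2 at *
  generalize WV (Fin.cons f0 f : Fin (m+2) → ℝ[X]) (Function.update (Function.update (fun j => (j : ℕ)) (Fin.last (m+1)) (m + 2))
        (Fin.castSucc (Fin.last m)) (m+1)) = T11 at *
  have hm3 : m + 1 + 2 = m + 3 := rfl
  rw [hm3] at hT
  generalize WV (Fin.cons f0 f : Fin (m+2) → ℝ[X]) (Function.update (fun j => (j : ℕ)) (Fin.last (m+1)) (m+3)) = T2 at *
  rw [hd2] at hT ⊢
  push_cast at hT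
  simp only [map_sub, map_neg, map_mul, map_add, map_one, map_ofNat] at hT hS ⊢
  linear_combination W * hT - Y * hS + 2 * (1 - X^2) * hP

open Polynomial in
lemma C_two : (C (2:ℝ) : ℝ[X]) = 2 := rfl

open Polynomial in
/-- Jacobi operator in the variable z = (1-x)/2. -/
noncomputable def Dz (a b : ℝ) (p : ℝ[X]) : ℝ[X] :=
  X * (1 - X) * derivative (derivative p) + (C (a + 1) - C (a + b + 2) * X) * derivative p

open Polynomial in
lemma Dz_comp (a b : ℝ) (p : ℝ[X]) :
    (1 - X ^ 2) * derivative (derivative (p.comp (C (1/2) * (1 - X)))) +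
      (C (b - a) - C (a + b + 2) * X) * derivative (p.comp (C (1/2) * (1 - X))) =
    (Dz a b p).comp (C (1/2) * (1 - X)) := by
  have h2 : (2 : ℝ[X]) * C (1/2) = 1 := by
    rw [← map_ofNat C 2, ← C_mul]; norm_num
  simp only [Dz, derivative_comp, derivative_mul, derivative_C, derivative_sub, derivative_one,
    derivative_X, derivative_zero, add_comp, mul_comp, sub_comp, X_comp, one_comp, C_comp, map_sub, map_add, map_one]
  simp only [C_two]
  generalize (derivative (derivative p)).comp _ = p2
  generalize (derivative p).comp _ = p1
  generalize (C (1/2) : ℝ[X]) = h at *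
  linear_combination ((C a + 1) * p1 + (1 - X) * h * p2) * h2

open Polynomial in
lemma Dz_coeff (a b : ℝ) (p : ℝ[X]) (j : ℕ) :
    (Dz a b p).coeff j = (j + 1) * (j + a + 1) * p.coeff (j+1) - j * (j + a + b + 1) * p.coeff j := by
  have e : Dz a b p = X * derivative (derivative p) - X * (X * derivative (derivative p)) +
    C (a+1) * derivative p - C (a+b+2) * (X * derivative p) := by unfold Dz; ring
  rw [e]
  rcases j with _ | _ | j
  all_goals simp only [coeff_add, coeff_sub, coeff_C_mul, coeff_X_mul, coeff_X_mul_zero, coeff_derivative]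
  · push_cast; ring
  · push_cast; ring
  · push_cast; ring

open Polynomial in
lemma Dz_add (a b : ℝ) (p q : ℝ[X]) : Dz a b (p + q) = Dz a b p + Dz a b q := by
  simp only [Dz, derivative_add]; ring

open Polynomial in
lemma Dz_Cmul (a b c : ℝ) (p : ℝ[X]) : Dz a b (C c * p) = C c * Dz a b p := by
  simp only [Dz, derivative_C_mul]; ring

open Polynomial in
lemma Dz_sum (a b : ℝ) {ι : Type*} (s : Finset ι) (f : ι → ℝ[X]) :
    Dz a b (∑ i ∈ s, f i) = ∑ i ∈ s, Dz a b (f i) := by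
  simp only [Dz, derivative_sum, Finset.mul_sum, Finset.sum_add_distrib]

open Polynomial in
lemma Dz_TS (a b : ℝ) (i j : ℕ) :
    Dz a b ((-X) ^ i * (1 - X) ^ j) =
      - C ((i:ℝ) * (i + a)) * ((-X) ^ (i-1) * (1-X)^(j+1)) - C ((j:ℝ) * (j + b)) * ((-X) ^ (i+1) * (1-X)^(j-1))
       - C (2 * (i:ℝ) * j + (a+1) * j + (b+1) * i) * ((-X) ^ i * (1-X)^j) := by
  unfold Dz
  rcases i with _ | _ | i <;> rcases j with _ | _ | j <;>
  · simp [derivative_pow, derivative_mul, map_add, map_mul, C_two]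
    try ring

lemma genBinom_succ (z : ℝ) (k : ℕ) : genBinom z (k+1) * (k+1) = genBinom z k * (z - k) := by
  unfold genBinom
  rw [Finset.prod_range_succ, Nat.factorial_succ]
  have : (k.factorial : ℝ) ≠ 0 := by positivity
  push_cast
  field_simp

open Polynomial in
noncomputable def Jz (a b : ℝ) (n : ℕ) : ℝ[X] :=
  ∑ j ∈ Finset.range (n+1), C (genBinom (n + a) j * genBinom (n + b) (n - j)) * ((-X) ^ (n-j) * (1 - X) ^ j)

open Polynomial in
lemma Jz_eval (a b : ℝ) (n : ℕ) (x : ℝ) : jacobiP a b n x = (Jz a b n).eval ((1 - x)/2) := by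
  unfold jacobiP Jz
  rw [eval_finsetSum, Finset.mul_sum]
  refine Finset.sum_congr rfl fun j hj => ?_
  have hj' : j ≤ n := by simpa [Nat.lt_succ_iff] using hj
  have : (2:ℝ)⁻¹ ^ n = 2⁻¹ ^ (n-j) * 2⁻¹ ^ j := by rw [← pow_add]; congr 1; omega
  simp only [eval_mul, eval_C, eval_pow, eval_neg, eval_X, eval_sub, eval_one]
  rw [this, show -((1-x)/2) = 2⁻¹ * (x - 1) by ring, show 1 - (1-x)/2 = 2⁻¹ * (x+1) by ring, mul_pow, mul_pow]
  ring

lemma w_rec (a b : ℝ) (n j : ℕ) (hj : j < n) :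
    genBinom (n + a) j * genBinom (n + b) (n - j) * (((n - j : ℕ):ℝ) * (((n - j : ℕ):ℝ) + a)) =
    genBinom (n + a) (j+1) * genBinom (n + b) (n - (j+1)) * (((j+1 : ℕ):ℝ) * (((j+1:ℕ):ℝ) + b)) := by
  obtain ⟨k, rfl⟩ : ∃ k, n = j + 1 + k := ⟨n - (j+1), by omega⟩
  have e1 : j + 1 + k - j = k + 1 := by omega
  have e2 : j + 1 + k - (j+1) = k := by omega
  rw [e1, e2]
  have h1 := genBinom_succ (((j+1+k:ℕ):ℝ) + a) j
  have h2 := genBinom_succ (((j+1+k:ℕ):ℝ) + b) k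
  push_cast at *
  set A := genBinom ((j:ℝ)+1+k+a) j
  set A' := genBinom ((j:ℝ)+1+k+a) (j+1)
  set B := genBinom ((j:ℝ)+1+k+b) k
  set B' := genBinom ((j:ℝ)+1+k+b) (k+1)
  linear_combination A * (k + 1 + a) * h2 - B * (j+1+b) * h1

open Polynomial in
lemma Jz_ode (a b : ℝ) (n : ℕ) : Dz a b (Jz a b n) = C (-lam a b n) * Jz a b n := by
  set w : ℕ → ℝ := fun j => genBinom (n + a) j * genBinom (n + b) (n - j) with hw
  have hJ : Jz a b n = ∑ j ∈ Finset.range (n+1), C (w j) * ((-X) ^ (n-j) * (1 - X) ^ j) := rfl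
  have hr : ∀ j, j < n → w j * (((n - j : ℕ):ℝ) * (((n - j : ℕ):ℝ) + a)) =
      w (j+1) * (((j+1 : ℕ):ℝ) * (((j+1:ℕ):ℝ) + b)) := fun j hj => w_rec a b n j hj
  have s1 : ∑ j ∈ Finset.range (n+1), C (w j * (((n - j : ℕ):ℝ) * (((n - j : ℕ):ℝ) + a))) * ((-X) ^ (n-j-1) * (1-X)^(j+1) : ℝ[X])
     = ∑ j ∈ Finset.range (n+1), C (w j * ((j:ℝ) * (j + b))) * ((-X) ^ (n-j) * (1-X)^j : ℝ[X]) := by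
    rw [Finset.sum_range_succ, Finset.sum_range_succ']
    congr 1
    · refine Finset.sum_congr rfl fun j hj => ?_
      rw [hr j (Finset.mem_range.1 hj)]; rfl
    · simp
  have s2 : ∑ j ∈ Finset.range (n+1), C (w j * ((j:ℝ) * (j + b))) * ((-X) ^ (n-j+1) * (1-X)^(j-1) : ℝ[X])
     = ∑ j ∈ Finset.range (n+1), C (w j * (((n - j : ℕ):ℝ) * (((n - j : ℕ):ℝ) + a))) * ((-X) ^ (n-j) * (1-X)^j : ℝ[X]) := by
    rw [Finset.sum_range_succ', Finset.sum_range_succ]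
    congr 1
    · refine Finset.sum_congr rfl fun j hj => ?_
      have := Finset.mem_range.1 hj
      rw [hr j this, show n - (j+1) + 1 = n - j by omega]; rfl
    · simp
  have hsplit : Dz a b (Jz a b n) = 
     - ∑ j ∈ Finset.range (n+1), C (w j * (((n - j : ℕ):ℝ) * (((n - j : ℕ):ℝ) + a))) * ((-X) ^ (n-j-1) * (1-X)^(j+1) : ℝ[X])
     - ∑ j ∈ Finset.range (n+1), C (w j * ((j:ℝ) * (j + b))) * ((-X) ^ (n-j+1) * (1-X)^(j-1) : ℝ[X])
     - ∑ j ∈ Finset.range (n+1), C (w j * (2 * ((n - j : ℕ):ℝ) * j + (a+1) * j + (b+1) * ((n - j : ℕ):ℝ))) * ((-X) ^ (n-j) * (1-X)^j : ℝ[X]) := by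
    rw [hJ, Dz_sum, ← Finset.sum_neg_distrib, ← Finset.sum_sub_distrib, ← Finset.sum_sub_distrib]
    refine Finset.sum_congr rfl fun j hj => ?_
    rw [Dz_Cmul, Dz_TS]
    simp only [C_mul]
    ring
  rw [hsplit, s1, s2, hJ, ← Finset.sum_neg_distrib, ← Finset.sum_sub_distrib, ← Finset.sum_sub_distrib, Finset.mul_sum]
  refine Finset.sum_congr rfl fun j hj => ?_
  have hj' : j ≤ n := by simpa [Nat.lt_succ_iff] using hj
  rw [← mul_assoc (C (-lam a b n)), ← C_mul]
  rw [show ∀ (A B D E : ℝ) (P : ℝ[X]), -(C A * P) - C B * P - C D * P = C (-A - B - D) * P by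
    intros; simp only [map_sub, map_neg]; ring]
  · congr 2
    rw [Nat.cast_sub hj', lam]
    ring
  · exact 0

open Polynomial in
lemma Dz_Xpow (b : ℝ) (A : ℕ) (g : ℝ[X]) :
    Dz (-A) b (X ^ A * g) = X ^ A * (Dz A b g - C (A * (b + 1)) * g) := by
  unfold Dz
  rcases A with _ | _ | A
  · simp
  · simp [C_two]; ring
  · simp [C_two]; ring

/-- coefficients of the hypergeometric series -/
noncomputable def cphi (α β : ℤ) (u j : ℕ) (s : ℝ) : ℝ :=
  poch (-(u : ℝ)) j * poch ((u : ℝ) - s + (α : ℝ) + (β : ℝ) + 1) j /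
          (poch ((α : ℝ) - s + 1) j * (j.factorial : ℝ))

lemma poch_succ (z : ℝ) (j : ℕ) : poch z (j+1) = poch z j * (z + j) := by
  unfold poch; rw [Finset.prod_range_succ]

lemma poch_neg_zero (u j : ℕ) (h : u < j) : poch (-(u:ℝ)) j = 0 := by
  unfold poch
  exact Finset.prod_eq_zero (Finset.mem_range.2 h) (by simp)

lemma poch_ne_zero (α : ℤ) (j : ℕ) (h : (j : ℤ) ≤ -α - 1) : poch ((α:ℝ) + 1) j ≠ 0 := by
  unfold poch
  rw [Finset.prod_ne_zero_iff]
  intro i hi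
  have hi' := Finset.mem_range.1 hi
  have : (α + 1 + (i:ℤ)) ≠ 0 := by omega
  exact_mod_cast this

lemma cphi_zero (α β : ℤ) (u j : ℕ) (h : u < j) (s : ℝ) : cphi α β u j s = 0 := by
  unfold cphi; rw [poch_neg_zero u j h]; simp

lemma poch_diff (f : ℝ → ℝ) (hf : Differentiable ℝ f) (j : ℕ) : Differentiable ℝ (fun s => poch (f s) j) := by
  unfold poch
  fun_prop

lemma cphi_diff (α β : ℤ) (u j : ℕ) (h : (j : ℤ) ≤ -α - 1) : DifferentiableAt ℝ (cphi α β u j) 0 := by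
  unfold cphi
  apply DifferentiableAt.div
  · apply DifferentiableAt.mul
    · fun_prop
    · exact poch_diff (fun s => (u : ℝ) - s + (α : ℝ) + (β : ℝ) + 1) (by fun_prop) j 0
  · apply DifferentiableAt.mul
    · exact poch_diff (fun s => (α : ℝ) - s + 1) (by fun_prop) j 0
    · fun_prop
  · apply mul_ne_zero
    · simpa using poch_ne_zero α j h
    · positivity

lemma cphi_rec (α β : ℤ) (u j : ℕ) (s : ℝ) (h : poch ((α:ℝ) - s + 1) (j+1) ≠ 0) :
    (j + 1) * (j + α - s + 1) * cphi α β u (j+1) s = (j - u) * (j + u - s + α + β + 1) * cphi α β u j s := by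
  unfold cphi
  rw [poch_succ] at h
  have h1 := left_ne_zero_of_mul h
  have h2 := right_ne_zero_of_mul h
  rw [poch_succ, poch_succ, poch_succ, Nat.factorial_succ]
  have h3 : (j.factorial : ℝ) ≠ 0 := by positivity
  have h4 : ((j:ℝ) + 1) ≠ 0 := by positivity
  push_cast
  have h5 : (j + α - s + 1 : ℝ) ≠ 0 := by convert h2 using 1; ring
  rw [show (α - s + 1 + j : ℝ) = j + α - s + 1 by ring]
  field_simp
  ring

lemma cphi_drec (α β : ℤ) (u j : ℕ) (hu : (u : ℤ) ≤ -α - 1) :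
    (j + 1) * ((j + α + 1) * deriv (cphi α β u (j+1)) 0 - cphi α β u (j+1) 0) =
    (j - u) * ((j + u + α + β + 1) * deriv (cphi α β u j) 0 - cphi α β u j 0) := by
  by_cases hj : j < u
  · have ev : (fun s : ℝ => (j + 1) * (j + α - s + 1) * cphi α β u (j+1) s) =ᶠ[nhds 0]
        (fun s => (j - u) * (j + u - s + α + β + 1) * cphi α β u j s) := by
      have hc : ContinuousAt (fun s : ℝ => poch ((α:ℝ) - s + 1) (j+1)) 0 :=
        (poch_diff (fun s => (α : ℝ) - s + 1) (by fun_prop) (j+1)).continuous.continuousAt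
      have := hc.eventually_ne (y := 0) (by simpa using poch_ne_zero α (j+1) (by push_cast; omega))
      filter_upwards [this] with s hs
      exact cphi_rec α β u j s hs
    have e := ev.deriv_eq
    have d1 := (cphi_diff α β u (j+1) (by push_cast; omega)).hasDerivAt
    have d0 := (cphi_diff α β u j (by omega)).hasDerivAt
    have l1 : HasDerivAt (fun s : ℝ => ((j:ℝ) + 1) * (j + α - s + 1)) (-((j:ℝ)+1)) 0 := by
      have := (((hasDerivAt_id (0:ℝ)).const_sub ((j:ℝ) + α)).add_const 1).const_mul ((j:ℝ)+1)
      simpa using this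
    have l0 : HasDerivAt (fun s : ℝ => ((j:ℝ) - u) * (j + u - s + α + β + 1)) (-((j:ℝ)-u)) 0 := by
      have := (((((hasDerivAt_id (0:ℝ)).const_sub ((j:ℝ) + u)).add_const (α:ℝ)).add_const (β:ℝ)).add_const 1).const_mul ((j:ℝ)-u)
      simpa using this
    have r1 := (l1.mul d1).deriv
    have r0 := (l0.mul d0).deriv
    have e' := r1.symm.trans (e.trans r0)
    linear_combination e'
  · have z1 : cphi α β u (j+1) = fun _ => 0 := by
      funext s; exact cphi_zero α β u (j+1) (by omega) s
    rw [z1]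
    rcases eq_or_lt_of_le (not_lt.1 hj) with h | h
    · subst h; simp
    · have z0 : cphi α β u j = fun _ => 0 := by
        funext s; exact cphi_zero α β u j h s
      rw [z0]; simp

open Polynomial in
noncomputable def Qphi (α β : ℤ) (u : ℕ) : ℝ[X] :=
  C (poch ((α : ℝ) + 1) (max u (-α - β - (u : ℤ) - 1).toNat) /
      ((max u.factorial (-α - β - (u : ℤ) - 1).toNat.factorial : ℕ) : ℝ)) *
    ∑ j ∈ Finset.range (u+1), C (deriv (cphi α β u j) 0) * X ^ j

open Polynomial in
lemma Qphi_coeff (α β : ℤ) (u j : ℕ) : (Qphi α β u).coeff j =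
    (poch ((α : ℝ) + 1) (max u (-α - β - (u : ℤ) - 1).toNat) /
      ((max u.factorial (-α - β - (u : ℤ) - 1).toNat.factorial : ℕ) : ℝ)) * deriv (cphi α β u j) 0 := by
  unfold Qphi
  rw [coeff_C_mul]
  congr 1
  rw [finsetSum_coeff]
  simp only [coeff_C_mul, coeff_X_pow]
  by_cases h : u < j
  · have z0 : cphi α β u j = fun _ => 0 := by
      funext s; exact cphi_zero α β u j h s
    rw [z0, Finset.sum_eq_zero]
    · simp
    · intro i hi
      have := Finset.mem_range.1 hi
      rw [if_neg (by omega), mul_zero]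
  · rw [Finset.sum_eq_single j]
    · simp
    · intro i _ hi
      rw [if_neg (Ne.symm hi), mul_zero]
    · intro hh; exact absurd (Finset.mem_range.2 (by omega)) hh

open Polynomial in
lemma Qphi_eval (α β : ℤ) (u : ℕ) (hu : (u : ℤ) ≤ -α - 1) (x : ℝ) :
    deriv (fun s => phiJ α β u s x) 0 = (Qphi α β u).eval ((1-x)/2) := by
  have : (fun s => phiJ α β u s x) = fun s => (poch ((α : ℝ) + 1) (max u (-α - β - (u : ℤ) - 1).toNat) /
      ((max u.factorial (-α - β - (u : ℤ) - 1).toNat.factorial : ℕ) : ℝ)) *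
        ∑ j ∈ Finset.range (u+1), cphi α β u j s * ((1-x)/2)^j := rfl
  rw [this]
  unfold Qphi
  rw [eval_mul, eval_C, eval_finsetSum]
  simp only [eval_mul, eval_C, eval_pow, eval_X]
  apply HasDerivAt.deriv
  apply HasDerivAt.const_mul
  apply HasDerivAt.fun_sum
  intro j hj
  have := Finset.mem_range.1 hj
  exact (cphi_diff α β u j (by omega)).hasDerivAt.mul_const _

open Polynomial in
lemma Jz_coeff (α β : ℤ) (u : ℕ) (hu : (u : ℤ) ≤ -α - 1) :
    (Jz α β u).coeff 0 ≠ 0 ∧ ∀ j, (Jz α β u).coeff j = (Jz α β u).coeff 0 * cphi α β u j 0 := by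
  constructor
  · rw [coeff_zero_eq_eval_zero, Jz, eval_finsetSum, Finset.sum_range_succ, Finset.sum_eq_zero]
    · simp [genBinom]
      constructor
      · rw [← ne_eq, Finset.prod_ne_zero_iff]
        intro i hi
        have hi' := Finset.mem_range.1 hi
        have : ((u:ℤ) + α - (i:ℤ)) ≠ 0 := by omega
        exact_mod_cast this
      · positivity
    · intro j hj
      have := Finset.mem_range.1 hj
      have : u - j ≠ 0 := by omega
      simp [this]
  · intro j
    by_cases hj : j ≤ u
    · induction j with
      | zero => simp [cphi, poch]
      | succ j ih =>
        have ih := ih (by omega)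
        have hd := congrArg (fun p => p.coeff j) (Jz_ode α β u)
        simp only [Dz_coeff, coeff_C_mul, lam] at hd
        have hp := poch_ne_zero α (j+1) (by push_cast; omega)
        have hr := cphi_rec α β u j 0 (by simpa using hp)
        rw [poch_succ] at hp
        have h2 := right_ne_zero_of_mul hp
        have h3 : ((j:ℝ)+1) * (j + α + 1) ≠ 0 := 
          mul_ne_zero (by positivity) (by convert h2 using 1; ring)
        apply mul_left_cancel₀ h3
        rw [ih] at hd
        linear_combination hd - (Jz α β u).coeff 0 * hr
    · rw [cphi_zero _ _ _ _ (by omega), mul_zero]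
      apply coeff_eq_zero_of_natDegree_lt
      refine lt_of_le_of_lt ?_ (not_le.1 hj)
      unfold Jz
      apply natDegree_sum_le_of_forall_le
      intro i hi
      have := Finset.mem_range.1 hi
      compute_degree
      omega

open Polynomial in
noncomputable def Qhat (α β : ℤ) (M : ℕ → ℝ) (n : ℕ) : ℝ[X] :=
  if ⌈((-α - β : ℤ) : ℚ) / 2⌉ ≤ (n : ℤ) ∧ (n : ℤ) ≤ -α - 1 then
    Qphi α β n - Qphi α β (-α - β - (n : ℤ) - 1).toNat
  else if -α ≤ (n : ℤ) ∧ (n : ℤ) ≤ -α - β - 1 then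
    C ((-1 : ℝ) ^ ((β : ℤ) + (n : ℤ)) *
      ((((n : ℤ) + α).toNat.factorial : ℝ) * (((n : ℤ) + β).toNat.factorial : ℝ) *
        ((-α - β - (n : ℤ) - 1).toNat.factorial : ℝ)) / (n.factorial : ℝ)) *
      (C (M ((α + (n : ℤ)).toNat) - 1)⁻¹ * Jz (α : ℝ) (β : ℝ) ((-α - β - (n : ℤ) - 1).toNat) +
        X ^ (-α).toNat * Jz (-(α : ℝ)) (β : ℝ) ((α + (n : ℤ)).toNat))
  else Jz (α : ℝ) (β : ℝ) n

lemma ceil_iff (s n : ℤ) : ⌈((s : ℤ) : ℚ) / 2⌉ ≤ n ↔ s ≤ 2 * n := by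
  rw [Int.ceil_le, div_le_iff₀ (by norm_num)]
  constructor
  · intro h
    have : s ≤ n * 2 := by exact_mod_cast h
    omega
  · intro h
    have : s ≤ n * 2 := by omega
    exact_mod_cast this

open Polynomial in
lemma Qhat_eval (α β : ℤ) (hαβ : α ≤ β) (M : ℕ → ℝ) (n : ℕ) (x : ℝ) :
    Phat α β M n x = (Qhat α β M n).eval ((1-x)/2) := by
  unfold Phat Qhat
  split_ifs with h1 h2
  · have := (ceil_iff (-α-β) n).1 h1.1
    rw [Qphi_eval _ _ _ h1.2, Qphi_eval _ _ _ (by omega), eval_sub]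
  · simp only [eval_mul, eval_C, eval_add, eval_pow, eval_X, Jz_eval]
  · exact Jz_eval _ _ _ _

open Polynomial in
lemma Qhat_ode1 (α β : ℤ) (hαβ : α ≤ β) (hβ : β ≤ -1) (M : ℕ → ℝ) (n : ℕ) 
    (h1 : ¬ (⌈((-α - β : ℤ) : ℚ) / 2⌉ ≤ (n : ℤ) ∧ (n : ℤ) ≤ -α - 1)) :
    Dz α β (Qhat α β M n) = C (-lam α β n) * Qhat α β M n := by
  unfold Qhat
  rw [if_neg h1]
  split_ifs with h2
  · rw [Dz_Cmul, Dz_add, Dz_Cmul, Jz_ode]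
    obtain ⟨A, rfl⟩ : ∃ A : ℕ, α = -A := ⟨(-α).toNat, by omega⟩
    have e1 : (-(-(A:ℤ))).toNat = A := by omega
    obtain ⟨k, rfl⟩ : ∃ k : ℕ, n = A + k := ⟨n - A, by omega⟩
    have e2 : (-(A:ℤ) + ((A + k : ℕ):ℤ)).toNat = k := by omega
    rw [e1, e2]
    have hX := Dz_Xpow β A (Jz A β k)
    rw [Jz_ode] at hX
    have e3 : ((((-(-(A:ℤ)) - β - ((A+k:ℕ):ℤ) - 1).toNat : ℕ)) : ℝ) = -β - k - 1 := by
      have : ((((-(-(A:ℤ)) - β - ((A+k:ℕ):ℤ) - 1).toNat : ℕ)) : ℤ) = -β - k - 1 := by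
        rw [Int.toNat_of_nonneg (by omega)]; push_cast; ring
      exact_mod_cast this
    push_cast at *
    have en : (- -(A:ℝ)) = A := neg_neg _
    rw [en, hX, e3]
    generalize Jz _ _ _ = P1
    generalize Jz _ _ _ = P2
    simp only [lam]
    rw [show (-(((-β - k - 1 : ℝ)) * (-β - k - 1 + -A + β + 1))) = -((A + k) * (A + k + -A + β + 1 : ℝ)) by ring]
    have e4 : (C (-(k * (k + A + β + 1)) : ℝ) : ℝ[X]) * P2 - C (A * (β + 1) : ℝ) * P2 = 
       C (-((A + k) * (A + k + -A + β + 1 : ℝ))) * P2 := by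
      rw [← sub_mul, ← C_sub]; congr 2; ring
    rw [e4]
    ring
  · exact Jz_ode _ _ _

open Polynomial in
lemma Qhat_ode2 (α β : ℤ) (hαβ : α ≤ β) (hβ : β ≤ -1) (M : ℕ → ℝ) (n : ℕ) 
    (h1 : (⌈((-α - β : ℤ) : ℚ) / 2⌉ ≤ (n : ℤ) ∧ (n : ℤ) ≤ -α - 1)) (u : ℕ) (hu : (u : ℤ) = -α - β - n - 1) :
    ∃ b : ℝ, Dz α β (Qhat α β M n) = C (-lam α β n) * Qhat α β M n + C b * Qhat α β M u := by
  have h1' := (ceil_iff (-α-β) n).1 h1.1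
  have eu : (-α - β - (n : ℤ) - 1).toNat = u := by omega
  have en : (-α - β - (u : ℤ) - 1).toNat = n := by omega
  have hQn : Qhat α β M n = Qphi α β n - Qphi α β u := by
    unfold Qhat; rw [if_pos h1, eu]
  have hQu : Qhat α β M u = Jz α β u := by
    unfold Qhat; rw [if_neg (fun h => by have := (ceil_iff (-α-β) u).1 h.1; omega), if_neg (by omega)]
  rw [hQn, hQu]
  obtain ⟨hJ0, hJ⟩ := Jz_coeff α β u (by omega)
  set K := (poch ((α : ℝ) + 1) (max u (-α - β - (u : ℤ) - 1).toNat) /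
      ((max u.factorial (-α - β - (u : ℤ) - 1).toNat.factorial : ℕ) : ℝ)) with hK
  have hK' : (poch ((α : ℝ) + 1) (max n (-α - β - (n : ℤ) - 1).toNat) /
      ((max n.factorial (-α - β - (n : ℤ) - 1).toNat.factorial : ℕ) : ℝ)) = K := by
    rw [hK, eu, en, max_comm, max_comm n.factorial]
  have hur : (u:ℝ) = -α - β - n - 1 := by exact_mod_cast hu
  refine ⟨K * (n - u) / (Jz α β u).coeff 0, ?_⟩
  ext j
  rw [Dz_coeff, coeff_add, coeff_C_mul, coeff_C_mul, coeff_sub, coeff_sub, Qphi_coeff, Qphi_coeff,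
    Qphi_coeff, Qphi_coeff, hK', hJ j, ← hK]
  have d1 := cphi_drec α β n j h1.2
  have d2 := cphi_drec α β u j (by omega)
  have hsym : ∀ j, cphi α β n j 0 = cphi α β u j 0 := by
    intro j
    unfold cphi
    rw [show ((n:ℝ) - 0 + α + β + 1) = -(u:ℝ) by rw [hur]; ring, show ((u:ℝ) - 0 + α + β + 1) = -(n:ℝ) by rw [hur]; ring]
    ring
  rw [hsym, hsym] at d1
  have hc : K * (n - u) / (Jz α β u).coeff 0 * ((Jz α β u).coeff 0 * cphi α β u j 0) = K * (n-u) * cphi α β u j 0 := by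
    field_simp
  rw [hc, lam]
  rw [hur] at d2 ⊢
  linear_combination K * d1 - K * d2

open Polynomial in
lemma wronskian_eval {k : ℕ} (hk : 0 < k) (r t l0 : ℝ) (f0 : ℝ[X]) (f : Fin k → ℝ[X]) (a b : Fin k → ℝ)
    (π : Fin k → Fin k) (hπ : ∀ i, b i = 0 ∨ π i ≠ i)
    (hD0 : (1 - X ^ 2) * derivative (derivative f0) + (C r - C t * X) * derivative f0 = C l0 * f0)
    (hD : ∀ i, (1 - X ^ 2) * derivative (derivative (f i)) + (C r - C t * X) * derivative (f i)
      = C (a i) * f i + C (b i) * f (π i)) (W Y : ℝ[X])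
    (hW : W = WV f (fun j => (j:ℕ))) (hY : Y = WV (Fin.cons f0 f : Fin (k+1) → ℝ[X]) (fun j => (j:ℕ)))
    (x : ℝ) :
    (1 - x ^ 2) * ((derivative (derivative Y)).eval x * W.eval x
        - 2 * (derivative W).eval x * (derivative Y).eval x
      + (derivative (derivative W)).eval x * Y.eval x)
      + (r - t * x - 2 * k * x) * (derivative Y).eval x * W.eval x
      - (r - t * x - 2 * (k - 1) * x) * (derivative W).eval x * Y.eval x
      + (-((k:ℝ) * (k - 1)) - k * t) * Y.eval x * W.eval x = l0 * Y.eval x * W.eval x := by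
  obtain ⟨m, rfl⟩ : ∃ m, k = m + 1 := ⟨k - 1, by omega⟩
  have h := congrArg (eval x) (wronskian_main r t l0 f0 f a b π hπ hD0 hD W Y hW hY)
  simp only [eval_add, eval_sub, eval_mul, eval_pow, eval_X, eval_one, eval_C, eval_ofNat] at h
  push_cast
  linear_combination h

open Polynomial in
/-- `Phat` as a polynomial in `x`. -/
noncomputable def PP (α β : ℤ) (M : ℕ → ℝ) (n : ℕ) : ℝ[X] :=
  (Qhat α β M n).comp (C (1/2) * (1 - X))

open Polynomial in
lemma PP_eval (α β : ℤ) (hαβ : α ≤ β) (M : ℕ → ℝ) (n : ℕ) :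
    Phat α β M n = fun x => (PP α β M n).eval x := by
  funext x
  rw [Qhat_eval α β hαβ, PP, eval_comp]
  congr 1
  simp
  ring

open Polynomial in
lemma iteratedDeriv_poly (p : ℝ[X]) (j : ℕ) :
    iteratedDeriv j (fun x => p.eval x) = fun x => (derivative^[j] p).eval x := by
  induction j with
  | zero => simp
  | succ j ih =>
    rw [iteratedDeriv_succ, ih, Function.iterate_succ_apply']
    funext x
    exact Polynomial.deriv _

open Polynomial in
lemma WV_eval {N : ℕ} (g : Fin N → ℝ[X]) (σ : Fin N → ℕ) (x : ℝ) :
    (WV g σ).eval x = Matrix.det (Matrix.of fun i j => (derivative^[σ j] (g i)).eval x) := by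
  unfold WV
  have := RingHom.map_det (evalRingHom x) (Matrix.of fun i j => derivative^[σ j] (g i))
  exact this

open Polynomial in
lemma OmegaJ_eval (α β : ℤ) (hαβ : α ≤ β) (M : ℕ → ℝ) (F : Finset ℕ) :
    OmegaJ α β M F = fun x => (WV (fun i => PP α β M (elemOf F i)) (fun j => (j:ℕ))).eval x := by
  funext x
  rw [WV_eval, OmegaJ]
  congr 1
  ext i j
  simp only [Matrix.of_apply]
  rw [PP_eval α β hαβ, iteratedDeriv_poly]

open Polynomial in
lemma exJacobi_eval (α β : ℤ) (hαβ : α ≤ β) (M : ℕ → ℝ) (F : Finset ℕ) (n : ℕ) :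
    exJacobi α β M F n = fun x => (WV (Fin.cons (PP α β M (n - uF F)) (fun i => PP α β M (elemOf F i)) :
      Fin (F.card + 1) → ℝ[X]) (fun j => (j:ℕ))).eval x := by
  funext x
  rw [WV_eval, exJacobi]
  congr 1
  ext i j
  simp only [Matrix.of_apply]
  refine Fin.cases ?_ (fun i => ?_) i
  · simp only [Fin.cases_zero, Fin.cons_zero]
    rw [PP_eval α β hαβ, iteratedDeriv_poly]
  · simp only [Fin.cases_succ, Fin.cons_succ]
    rw [PP_eval α β hαβ, iteratedDeriv_poly]

open Polynomial in
lemma PP_ode1 (α β : ℤ) (hαβ : α ≤ β) (hβ : β ≤ -1) (M : ℕ → ℝ) (n : ℕ)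
    (h1 : ¬ (⌈((-α - β : ℤ) : ℚ) / 2⌉ ≤ (n : ℤ) ∧ (n : ℤ) ≤ -α - 1)) :
    (1 - X ^ 2) * derivative (derivative (PP α β M n)) +
      (C ((β:ℝ) - α) - C ((α:ℝ) + β + 2) * X) * derivative (PP α β M n) =
      C (-lam α β n) * PP α β M n := by
  unfold PP
  rw [Dz_comp, Qhat_ode1 α β hαβ hβ M n h1, mul_comp, C_comp]

open Polynomial in
lemma PP_ode (α β : ℤ) (hαβ : α ≤ β) (hβ : β ≤ -1) (M : ℕ → ℝ) (F : Finset ℕ)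
    (hFc : ∀ k : ℕ, -β ≤ (k : ℤ) → (k : ℤ) ≤ -α - β - 1 → k ∈ F) (i : Fin F.card) :
    ∃ b : ℝ, ∃ p : Fin F.card, (b = 0 ∨ p ≠ i) ∧
    (1 - X ^ 2) * derivative (derivative (PP α β M (elemOf F i))) +
      (C ((β:ℝ) - α) - C ((α:ℝ) + β + 2) * X) * derivative (PP α β M (elemOf F i)) =
      C (-lam α β (elemOf F i)) * PP α β M (elemOf F i) + C b * PP α β M (elemOf F p) := by
  generalize hn : elemOf F i = n
  by_cases h1 : (⌈((-α - β : ℤ) : ℚ) / 2⌉ ≤ (n : ℤ) ∧ (n : ℤ) ≤ -α - 1)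
  · have h1' := (ceil_iff (-α-β) n).1 h1.1
    obtain ⟨u, hu⟩ : ∃ u : ℕ, (u : ℤ) = -α - β - n - 1 := ⟨(-α - β - n - 1).toNat, by omega⟩
    obtain ⟨b, hb⟩ := Qhat_ode2 α β hαβ hβ M n h1 u hu
    have huF : u ∈ F := hFc u (by omega) (by omega)
    have hp : elemOf F ((F.orderIsoOfFin rfl).symm ⟨u, huF⟩) = u := by
      unfold elemOf
      rw [OrderIso.apply_symm_apply]
    refine ⟨b, (F.orderIsoOfFin rfl).symm ⟨u, huF⟩, Or.inr ?_, ?_⟩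
    · intro h
      rw [h, hn] at hp
      omega
    · rw [hp]
      unfold PP
      rw [Dz_comp, hb, add_comp, mul_comp, C_comp, mul_comp, C_comp]
  · refine ⟨0, i, Or.inl rfl, ?_⟩
    rw [PP_ode1 α β hαβ hβ M n h1]
    simp

/-- second order differential equation for the exceptional Jacobi polynomials. -/
theorem exceptional_jacobi_differential_equation
    (α β : ℤ) (M : ℕ → ℝ) (F : Finset ℕ)
    (hαβ : α ≤ β) (hβ : β ≤ -1)
    (hM : ∀ i, M i ≠ 0 ∧ M i ≠ 1)
    (hFpos : ∀ f ∈ F, 0 < f)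
    (hFc : ∀ k : ℕ, -β ≤ (k : ℤ) → (k : ℤ) ≤ -α - β - 1 → k ∈ F)
    (n : ℕ) (hn : inSigma F n) (x : ℝ) (hx : OmegaJ α β M F x ≠ 0) :
    (1 - x ^ 2) * iteratedDeriv 2 (exJacobi α β M F n) x +
      ((β : ℝ) - (α : ℝ) - ((α : ℝ) + (β : ℝ) + 2 * (F.card : ℝ) + 2) * x -
          2 * (1 - x ^ 2) * deriv (OmegaJ α β M F) x / OmegaJ α β M F x) *
        deriv (exJacobi α β M F n) x +
      (-lam (α : ℝ) (β : ℝ) (F.card : ℝ) +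
          ((α : ℝ) - (β : ℝ) + (2 * (F.card : ℝ) + (α : ℝ) + (β : ℝ)) * x) *
            deriv (OmegaJ α β M F) x / OmegaJ α β M F x +
          (1 - x ^ 2) * iteratedDeriv 2 (OmegaJ α β M F) x / OmegaJ α β M F x) *
        exJacobi α β M F n x =
    -lam (α : ℝ) (β : ℝ) ((n - uF F : ℕ) : ℝ) * exJacobi α β M F n x := by
  have hk : 0 < F.card :=
    Finset.card_pos.2 ⟨(-β).toNat, hFc _ (by omega) (by omega)⟩
  have hn0 : ¬ (⌈((-α - β : ℤ) : ℚ) / 2⌉ ≤ ((n - uF F : ℕ) : ℤ) ∧ ((n - uF F : ℕ) : ℤ) ≤ -α - 1) := by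
    intro h
    have h1 := (ceil_iff (-α-β) _).1 h.1
    have h2 := h.2
    exact hn.2 (hFc _ (by omega) (by omega))
  choose b p hbp hode using PP_ode α β hαβ hβ M F hFc
  have key := wronskian_eval hk _ _ _ _ (fun i => PP α β M (elemOf F i)) _ b p hbp
    (PP_ode1 α β hαβ hβ M _ hn0) hode _ _ rfl rfl x
  rw [OmegaJ_eval α β hαβ] at hx ⊢
  rw [exJacobi_eval α β hαβ]
  generalize WV (fun i => PP α β M (elemOf F i)) (fun j => (j:ℕ)) = W at *
  generalize WV (Fin.cons (PP α β M (n - uF F)) (fun i => PP α β M (elemOf F i)) :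
      Fin (F.card + 1) → Polynomial ℝ) (fun j => (j:ℕ)) = Y at *
  rw [iteratedDeriv_poly, iteratedDeriv_poly, Polynomial.deriv, Polynomial.deriv]
  simp only [Function.iterate_succ, Function.iterate_zero, Function.comp, id] at *
  simp only [lam] at key ⊢
  generalize Polynomial.eval x W = w at *
  generalize Polynomial.eval x Y = y at *
  field_simp
  linear_combination key
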